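/- Fix r = p^ν a prime power, d ≥ 1, k = ⌈(r-1)d/r⌉, s = (r-1)d - r(k-1) with s < r, m = (2r-1)(k+1), color classes C_1, ..., C_{k+1} of size 2r-1 partitioning [m]. The configuration space 𝔠 of tuples (A_1,...,A_r;B) (disjoint rainbow sets A_i, at most s of them of size k+1, B the complement, B ≠ [m]) is (rk+s-2)-connected. -/

import Mathlib

open scoped Classical

noncomputable section

/-- A simplex of the configuration space `𝔠`: a set of vertices `(v, i) ∈ [m] × [r]`
(meaning `v ∈ Aᵢ`) such that the resulting sets `A₁, …, A_r` are pairwise disjoint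
rainbow sets with at most `s` of them of cardinality `k+1`. -/
def IsConfSimplex (m r k s : ℕ) (C : Fin (k + 1) → Finset (Fin m))
    (S : Finset (Fin m × Fin r)) : Prop :=
  (∀ v : Fin m, ∀ i j : Fin r, (v, i) ∈ S → (v, j) ∈ S → i = j) ∧
  (∀ i : Fin r, ∀ c : Fin (k + 1),
    (S.filter fun q => q.2 = i ∧ q.1 ∈ C c).card ≤ 1) ∧
  ((Finset.univ.filter fun i : Fin r =>
    (S.filter fun q => q.2 = i).card = k + 1).card ≤ s)

/-- The geometric realization of `𝔠` inside the standard simplex on `[m] × [r]`. -/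
def confRealization (m r k s : ℕ) (C : Fin (k + 1) → Finset (Fin m)) :
    Set ((Fin m × Fin r) → ℝ) :=
  {x ∈ stdSimplex ℝ (Fin m × Fin r) |
    IsConfSimplex m r k s C (Finset.univ.filter fun q => x q ≠ 0)}

/-!
A vertex `(v, i)` of `𝔠` writes the value `v` into the cell `(i, c)`, where `c` is the colour of
`v`; simplices are the injective partial fillings of the `r × (k + 1)` array of cells whose sets of
filled cells contain at most `s` full rows. Such sets of cells are the independent sets of a matroid
of rank `rk + s`, and every cell has `2r - 1` candidate values, all of its own colour class of `r`
cells. Induction on the matroid, deleting or contracting one cell at a time, yields a discrete Morse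
matching whose critical simplices are one vertex and simplices of dimension `rk + s - 1`: the
candidate lists of length `2t - 1` for `t` cells of a colour stay long enough when one cell is
removed together with two values.

Instead of passing to a CW complex, maps from a compact metric space of small Hausdorff dimension
are pushed down the matching: first approximate the map by a Lipschitz one, which misses an interior
point of the current critical simplex, then project radially from that point; a matched interval is
projected away from a point outside the simplex. Spheres of dimension at most `rk + s - 2` have
small enough dimension, so every map from one is nullhomotopic.
-/

section MorseBuilt

variable {V : Type*}

/-- A simplicial complex (a lower set of faces, `∅` included) assembled by adding intervals `[R, F]`
of faces one at a time. This encodes a discrete Morse matching: an interval with `R ≠ F` is matched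
within itself, except that `[∅, F]` leaves a critical vertex, while an interval `[F, F]` is a
critical simplex, which must have at least `n` vertices. -/
inductive IsMorseBuilt (n : ℕ) : Set (Finset V) → Prop
  | empty : IsMorseBuilt n ∅
  | addInterval {K : Set (Finset V)} {R F : Finset V} (hK : IsMorseBuilt n K) (hRF : R ⊆ F)
      (hn : R = F → n ≤ F.card) (hR : R ∉ K) (hF : ∀ S ⊆ F, ¬R ⊆ S → S ∈ K) :
      IsMorseBuilt n (K ∪ Set.Icc R F)

theorem isLowerSet_union_Icc {K : Set (Finset V)} {R F : Finset V} (hK : IsLowerSet K)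
    (hF : ∀ S ⊆ F, ¬R ⊆ S → S ∈ K) : IsLowerSet (K ∪ Set.Icc R F) := by
  rintro S T hTS (hS | hS)
  · exact Or.inl (hK hTS hS)
  · by_cases hRT : R ⊆ T
    · exact Or.inr ⟨hRT, hTS.trans hS.2⟩
    · exact Or.inl (hF T (hTS.trans hS.2) hRT)

namespace IsMorseBuilt

variable {n : ℕ}

theorem isLowerSet {K : Set (Finset V)} (h : IsMorseBuilt n K) : IsLowerSet K := by
  induction h with
  | empty => exact isLowerSet_empty
  | addInterval _ _ _ _ hF ih => exact isLowerSet_union_Icc ih hF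

theorem singleton_empty : IsMorseBuilt 0 ({∅} : Set (Finset V)) := by
  simpa using addInterval (F := (∅ : Finset V)) (empty (n := 0)) subset_rfl
    (fun _ => le_rfl) (Set.notMem_empty _) (fun S _ hS => (hS (Finset.empty_subset S)).elim)

theorem union_join_vertex {x : V} {D L : Set (Finset V)} (hD : IsMorseBuilt n D)
    (hL : IsMorseBuilt (n - 1) L) (hx : ∀ S ∈ D, x ∉ S) (hLD : L ⊆ D) :
    IsMorseBuilt n (D ∪ {S | x ∈ S ∧ S.erase x ∈ L}) := by
  induction hL with
  | empty => simpa using hD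
  | @addInterval L R F _ hRF hn hR hF ih =>
    have hFD : F ∈ D := hLD (Or.inr ⟨hRF, le_rfl⟩)
    have hxF : x ∉ F := hx F hFD
    have hxR : x ∉ R := fun h => hxF (hRF h)
    have key := (ih (Set.subset_union_left.trans hLD)).addInterval
      (R := insert x R) (F := insert x F) (Finset.insert_subset_insert x hRF) ?_ ?_ ?_
    · convert key using 1
      ext S
      simp only [Set.mem_union, Set.mem_ofPred_eq, Set.mem_Icc,
        Finset.insert_subset_iff, Finset.subset_erase, Finset.subset_insert_iff]
      tauto
    · intro h
      have hRF' : R = F := by rw [← Finset.erase_insert hxR, h, Finset.erase_insert hxF]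
      have := hn hRF'
      rw [Finset.card_insert_of_notMem hxF]
      lia
    · rintro (h | ⟨-, h⟩)
      · exact hx _ h (Finset.mem_insert_self x R)
      · exact hR (Finset.erase_insert hxR ▸ h)
    · intro S hS hRS
      rw [Finset.subset_insert_iff] at hS
      by_cases hxS : x ∈ S
      · refine Or.inr ⟨hxS, hF _ hS fun h => hRS ?_⟩
        exact Finset.insert_subset hxS (h.trans (Finset.erase_subset x S))
      · rw [Finset.erase_eq_of_notMem hxS] at hS
        exact Or.inl (hD.isLowerSet hS hFD)

theorem cone {n' : ℕ} {x : V} {L : Set (Finset V)} (hL : IsMorseBuilt n' L)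
    (hx : ∀ S ∈ L, x ∉ S) : IsMorseBuilt n {S | S.erase x ∈ L} := by
  induction hL with
  | empty => simpa using empty
  | @addInterval L R F _ hRF hn hR hF ih =>
    have hxF : x ∉ F := hx F (Or.inr ⟨hRF, le_rfl⟩)
    have hxR : x ∉ R := fun h => hxF (hRF h)
    have key := (ih fun S hS => hx S (Or.inl hS)).addInterval (R := R) (F := insert x F)
      (hRF.trans (Finset.subset_insert x F)) ?_ ?_ ?_
    · convert key using 1
      ext S
      simp only [Set.mem_union, Set.mem_ofPred_eq, Set.mem_Icc,
        Finset.subset_erase, Finset.subset_insert_iff]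
      tauto
    · exact fun h => (hxR (h ▸ Finset.mem_insert_self x F)).elim
    · rwa [Set.mem_ofPred_eq, Finset.erase_eq_of_notMem hxR]
    · intro S hS hRS
      exact hF _ (Finset.subset_insert_iff.1 hS) fun h => hRS (h.trans (Finset.erase_subset x S))

end IsMorseBuilt

end MorseBuilt

section Filling

open scoped Matroid

variable {V E W Q : Type*} {M : Matroid E} {cell : V → E} {val : V → W} {κ : E → Q} {A : Set V}

/-- The complex of finite partial injective fillings: a vertex `x` writes the value `val x` into the
cell `cell x`. The faces are the sets of vertices from `A` using each cell and each value at most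
once and whose cells are independent in `M`. -/
def fillingComplex (M : Matroid E) (cell : V → E) (val : V → W) (A : Set V) : Set (Finset V) :=
  {S | ↑S ⊆ A ∧ Set.InjOn cell S ∧ Set.InjOn val S ∧ M.Indep (cell '' S)}

/-- The vertices of `A` using neither the cell nor the value of `x`. -/
def linkVertices (cell : V → E) (val : V → W) (A : Set V) (x : V) : Set V :=
  {y ∈ A | cell y ≠ cell x ∧ val y ≠ val x}

theorem insert_mem_fillingComplex_iff {x : V} (hxA : x ∈ A) (hx : M.IsNonloop (cell x))
    {S : Finset V} (hxS : x ∉ S) :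
    insert x S ∈ fillingComplex M cell val A ↔
      S ∈ fillingComplex (M ／ {cell x}) cell val (linkVertices cell val A x) := by
  have hxS' : x ∉ (S : Set V) := hxS
  simp only [fillingComplex, linkVertices, Set.mem_ofPred_eq, Finset.coe_insert,
    Set.insert_subset_iff, Set.injOn_insert hxS', Set.image_insert_eq, hx.contractElem_indep_iff]
  simp only [Set.subset_def, Set.mem_ofPred_eq, Set.mem_image, not_exists, not_and]
  grind

theorem fillingComplex_link_subset {x : V} :
    fillingComplex (M ／ {cell x}) cell val (linkVertices cell val A x) ⊆
      fillingComplex M cell val (A \ {x}) := by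
  rintro S ⟨hSA, hcell, hval, hind⟩
  refine ⟨fun y hy => ⟨(hSA hy).1, ?_⟩, hcell, hval, hind.of_contract⟩
  rintro rfl
  exact (hSA hy).2.1 rfl

theorem fillingComplex_eq_union_join {x : V} (hxA : x ∈ A) (hx : M.IsNonloop (cell x)) :
    fillingComplex M cell val A = fillingComplex M cell val (A \ {x}) ∪
      {S | x ∈ S ∧ S.erase x ∈
        fillingComplex (M ／ {cell x}) cell val (linkVertices cell val A x)} := by
  ext S
  by_cases hxS : x ∈ S
  · have h := insert_mem_fillingComplex_iff (val := val) hxA hx (Finset.notMem_erase x S)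
    rw [Finset.insert_erase hxS] at h
    have hnot : S ∉ fillingComplex M cell val (A \ {x}) := fun hS => (hS.1 hxS).2 rfl
    simp [h, hxS, hnot]
  · simp [fillingComplex, hxS, Set.subset_sdiff]

theorem fillingComplex_sdiff_singleton_of_not_isNonloop {x : V} (hx : ¬M.IsNonloop (cell x)) :
    fillingComplex M cell val (A \ {x}) = fillingComplex M cell val A := by
  refine Set.Subset.antisymm (fun S hS => ⟨hS.1.trans Set.sdiff_subset, hS.2⟩) fun S hS => ?_
  refine ⟨Set.subset_sdiff_singleton hS.1 fun hxS => hx ?_, hS.2⟩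
  exact Matroid.indep_singleton.1 (hS.2.2.2.subset (by simpa using ⟨x, hxS, rfl⟩))

theorem IsMorseBuilt.fillingComplex_of_sdiff_singleton {n : ℕ} {x : V}
    (hdel : IsMorseBuilt n (fillingComplex M cell val (A \ {x})))
    (hlink : x ∈ A → M.IsNonloop (cell x) → IsMorseBuilt (n - 1)
      (fillingComplex (M ／ {cell x}) cell val (linkVertices cell val A x))) :
    IsMorseBuilt n (fillingComplex M cell val A) := by
  by_cases hxA : x ∈ A
  · by_cases hx : M.IsNonloop (cell x)
    · rw [fillingComplex_eq_union_join hxA hx]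
      exact hdel.union_join_vertex (hlink hxA hx) (fun S hS hxS => (hS.1 hxS).2 rfl)
        fillingComplex_link_subset
    · rwa [← fillingComplex_sdiff_singleton_of_not_isNonloop hx]
  · rwa [Set.sdiff_singleton_eq_self hxA] at hdel

theorem IsMorseBuilt.fillingComplex_of_sdiff {n : ℕ} {T : Set V} (hT : T.Finite)
    (hdel : IsMorseBuilt n (fillingComplex M cell val (A \ T)))
    (hlink : ∀ x ∈ T, x ∈ A → M.IsNonloop (cell x) → ∀ A', A \ T ⊆ A' → IsMorseBuilt (n - 1)
      (fillingComplex (M ／ {cell x}) cell val (linkVertices cell val A' x))) :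
    IsMorseBuilt n (fillingComplex M cell val A) := by
  induction T, hT using Set.Finite.induction_on generalizing A with
  | empty => simpa using hdel
  | @insert x T _ _ ih =>
    rw [Set.insert_eq, ← Set.sdiff_sdiff] at hdel
    refine fillingComplex_of_sdiff_singleton (ih hdel fun y hyT hyA hy A' hA' => ?_)
      fun hxA hx => hlink x (Set.mem_insert x T) hxA hx A Set.sdiff_subset
    refine hlink y (Set.mem_insert_of_mem x hyT) hyA.1 hy A' ?_
    rwa [Set.insert_eq, ← Set.sdiff_sdiff]

theorem fillingComplex_eq_cone {x : V} (hxA : x ∈ A) (hx : M.IsColoop (cell x))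
    (hA : linkVertices cell val A x = A \ {x}) :
    fillingComplex M cell val A =
      {S | S.erase x ∈ fillingComplex (M ／ {cell x}) cell val (A \ {x})} := by
  have hdel : fillingComplex M cell val (A \ {x}) =
      fillingComplex (M ／ {cell x}) cell val (A \ {x}) := by
    refine Set.Subset.antisymm (fun S hS => ⟨hS.1, hS.2.1, hS.2.2.1, ?_⟩)
      (by simpa only [hA] using
        fillingComplex_link_subset (M := M) (cell := cell) (val := val) (A := A) (x := x))
    rw [hx.isNonloop.contractElem_indep_iff]
    refine ⟨?_, hx.insert_indep_of_indep hS.2.2.2⟩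
    rintro ⟨y, hy, hyx⟩
    exact (hA.superset (hS.1 hy)).2.1 hyx
  rw [fillingComplex_eq_union_join hxA hx.isNonloop, hA, hdel]
  ext S
  by_cases hxS : x ∈ S
  · simp [fillingComplex, hxS, Set.subset_sdiff]
  · simp [hxS, Finset.erase_eq_of_notMem]

theorem fillingComplex_deleteElem {e : E} (hA : ∀ y ∈ A, cell y ≠ e) :
    fillingComplex (M ＼ {e}) cell val A = fillingComplex M cell val A := by
  ext S
  simp only [fillingComplex, Set.mem_ofPred_eq, Matroid.deleteElem_indep_iff, Set.mem_image,
    not_exists, not_and]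
  exact ⟨fun h => ⟨h.1, h.2.1, h.2.2.1, h.2.2.2.1⟩,
    fun h => ⟨h.1, h.2.1, h.2.2.1, h.2.2.2, fun y hy => hA y (h.1 hy)⟩⟩

theorem fillingComplex_eq_singleton_empty (hM : M.eRank = 0) :
    fillingComplex M cell val A = {∅} := by
  rw [Matroid.eRank_eq_zero_iff] at hM
  ext S
  rw [fillingComplex, hM]
  simp +contextual [Matroid.loopyOn_indep_iff, iff_def]

theorem eRank_contractElem_add_one {e : E} (he : M.IsNonloop e) :
    (M ／ {e}).eRank + 1 = M.eRank := by
  obtain ⟨B, hB⟩ := (M ／ {e}).exists_isBase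
  obtain ⟨hBe, hdisj⟩ := he.indep.contract_isBase_iff.1 hB
  rw [← hB.encard_eq_eRank, ← hBe.encard_eq_eRank, Set.encard_union_eq hdisj,
    Set.encard_singleton]

theorem natCast_sub_one_le_eRank_contractElem {n : ℕ} (hn : n ≤ M.eRank) {e : E}
    (he : M.IsNonloop e) : (n - 1 : ℕ) ≤ (M ／ {e}).eRank := by
  rw [← eRank_contractElem_add_one he] at hn
  rw [ENat.natCast_sub]
  exact tsub_le_iff_right.2 hn

theorem eRank_deleteElem {e : E} (he : ¬M.IsColoop e) : (M ＼ {e}).eRank = M.eRank := by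
  rw [Matroid.isColoop_iff_sdiff_not_spanning, not_not] at he
  exact he.eRank_restrict

/-- Every cell of `M` may receive at least `2 t - 1` vertices of `A`, where `t` is the number of
cells of `M` in its colour class. -/
def HasLongLists (M : Matroid E) (cell : V → E) (κ : E → Q) (A : Set V) : Prop :=
  ∀ e ∈ M.E, 2 * {e' ∈ M.E | κ e' = κ e}.ncard ≤ {y ∈ A | cell y = e}.ncard + 1

theorem HasLongLists.exists_vertex [Finite E] (h : HasLongLists M cell κ A) {e : E}
    (he : e ∈ M.E) : ∃ x ∈ A, cell x = e := by
  have hpos : 0 < {e' ∈ M.E | κ e' = κ e}.ncard := (Set.ncard_pos).2 ⟨e, he, rfl⟩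
  have := h e he
  obtain ⟨x, hx⟩ := (Set.ncard_pos (Set.finite_of_ncard_pos (s := {y ∈ A | cell y = e})
    (by lia))).1 (by lia : 0 < {y ∈ A | cell y = e}.ncard)
  exact ⟨x, hx⟩

/- Giving up one cell of a colour shortens the demand on the lists of that colour by two, so that
two values of that colour may be given up as well. -/
theorem HasLongLists.remove_cell [Finite V] [Finite E] (h : HasLongLists M cell κ A)
    (hinj : Function.Injective fun x => (cell x, val x))
    (hκ : ∀ x y, val x = val y → κ (cell x) = κ (cell y))
    {x x' : V} (hx : cell x ∈ M.E) (hxx' : κ (cell x') = κ (cell x))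
    {N : Matroid E} (hN : N.E = M.E \ {cell x}) {A' : Set V}
    (hA' : ∀ y ∈ A, cell y ≠ cell x → val y ≠ val x → val y ≠ val x' → y ∈ A') :
    HasLongLists N cell κ A' := by
  intro e heN
  rw [hN] at heN ⊢
  have hlist := h e heN.1
  by_cases hκe : κ e = κ (cell x)
  · have hclass : {e' ∈ M.E \ {cell x} | κ e' = κ e} = {e' ∈ M.E | κ e' = κ e} \ {cell x} := by
      ext; grind
    have hcard := Set.ncard_sdiff_singleton_add_one
      (show cell x ∈ {e' ∈ M.E | κ e' = κ e} from ⟨hx, hκe.symm⟩)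
    have hlost : ({y ∈ A | cell y = e} \ {y ∈ A' | cell y = e}).ncard ≤ 2 := by
      refine (Set.ncard_le_ncard_of_injOn (t := {val x, val x'}) val ?_ ?_).trans
        ((Set.ncard_insert_le _ _).trans (by rw [Set.ncard_singleton]))
      · rintro y ⟨⟨hyA, rfl⟩, hyA'⟩
        by_contra hy
        simp only [Set.mem_insert_iff, Set.mem_singleton_iff, not_or] at hy
        exact hyA' ⟨hA' y hyA heN.2 hy.1 hy.2, rfl⟩
      · exact fun y hy z hz hyz => hinj (Prod.ext (hy.1.2.trans hz.1.2.symm) hyz)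
    have := Set.le_ncard_sdiff {y ∈ A' | cell y = e} {y ∈ A | cell y = e}
    rw [hclass]
    lia
  · have hclass : {e' ∈ M.E \ {cell x} | κ e' = κ e} = {e' ∈ M.E | κ e' = κ e} := by
      ext; grind
    rw [hclass]
    refine hlist.trans (Nat.add_le_add_right (Set.ncard_le_ncard ?_) 1)
    rintro y ⟨hyA, rfl⟩
    exact ⟨hA' y hyA heN.2 (fun hy => hκe (hκ y x hy))
      fun hy => hκe ((hκ y x' hy).trans hxx'), rfl⟩

theorem isMorseBuilt_fillingComplex_of_vertex {n : ℕ} {x : V} (hxA : x ∈ A)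
    (hA : linkVertices cell val A x = A \ {x})
    (hdel : ¬M.IsColoop (cell x) →
      IsMorseBuilt n (fillingComplex (M ＼ {cell x}) cell val (A \ {x})))
    (hlink : IsMorseBuilt (n - 1) (fillingComplex (M ／ {cell x}) cell val (A \ {x}))) :
    IsMorseBuilt n (fillingComplex M cell val A) := by
  by_cases hcol : M.IsColoop (cell x)
  · rw [fillingComplex_eq_cone hxA hcol hA]
    exact hlink.cone fun S hS hxS => (hS.1 hxS).2 rfl
  · have hcell : ∀ y ∈ A \ {x}, cell y ≠ cell x := fun y hy => (hA.superset hy).2.1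
    refine IsMorseBuilt.fillingComplex_of_sdiff_singleton (x := x) ?_ fun _ _ => by rwa [hA]
    rw [← fillingComplex_deleteElem hcell]
    exact hdel hcol

/- Pick a nonloop `e` and a vertex `x` in the cell `e`. Deleting the vertices that share their value
with `x`, then those that share their cell with `x`, turns `x` into a vertex compatible with all the
others; the order matters, as the links of the first kind lose one value and those of the second
kind two. -/
theorem isMorseBuilt_fillingComplex [Finite V] [Finite E] {n : ℕ} (hn : n ≤ M.eRank)
    (hinj : Function.Injective fun x => (cell x, val x))
    (hκ : ∀ x y, val x = val y → κ (cell x) = κ (cell y)) (h : HasLongLists M cell κ A) :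
    IsMorseBuilt n (fillingComplex M cell val A) := by
  induction hN : M.E.ncard using Nat.strong_induction_on generalizing M A n with | _ N ih
  subst hN
  rcases M.eq_loopyOn_or_rankPos with hM | hM
  · have hM : M.eRank = 0 := Matroid.eRank_eq_zero_iff.2 hM
    obtain rfl : n = 0 := by simpa [hM] using hn
    exact fillingComplex_eq_singleton_empty hM ▸ IsMorseBuilt.singleton_empty
  obtain ⟨e, he⟩ := M.exists_isNonloop
  obtain ⟨x, hxA, rfl⟩ := h.exists_vertex he.mem_ground
  have hcard {y : V} (hy : cell y ∈ M.E) : (M.E \ {cell y}).ncard < M.E.ncard :=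
    Set.ncard_sdiff_singleton_lt_of_mem hy
  have hlink (y : V) (hxy : κ (cell x) = κ (cell y)) (hy : M.IsNonloop (cell y)) (A' : Set V)
      (hA' : ∀ z ∈ A, cell z ≠ cell y → val z ≠ val y → val z ≠ val x → z ∈ A') :
      IsMorseBuilt (n - 1) (fillingComplex (M ／ {cell y}) cell val A') := by
    exact ih _ (hcard hy.mem_ground) (natCast_sub_one_le_eRank_contractElem hn hy)
      (h.remove_cell hinj hκ hy.mem_ground hxy rfl hA') rfl
  let T₁ : Set V := {y | y ≠ x ∧ val y = val x}
  let T₂ : Set V := {y | y ≠ x ∧ cell y = cell x}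
  have hA : linkVertices cell val ((A \ T₁) \ T₂) x = ((A \ T₁) \ T₂) \ {x} := by
    ext y
    simp only [linkVertices, T₁, T₂, Set.mem_ofPred_eq, Set.mem_sdiff, Set.mem_singleton_iff]
    grind
  refine IsMorseBuilt.fillingComplex_of_sdiff T₁.toFinite ?_ fun y hyT _ hy A' hA' =>
    hlink y (hκ x y hyT.2.symm) hy _ fun z hz hzc hzv hzx =>
      ⟨hA' ⟨hz, fun hzT => hzx hzT.2⟩, hzc, hzv⟩
  refine IsMorseBuilt.fillingComplex_of_sdiff T₂.toFinite ?_ fun y hyT _ hy A' hA' =>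
    hlink y (congrArg κ hyT.2.symm) hy _ fun z hz hzc hzv hzx =>
      ⟨hA' ⟨⟨hz, fun hzT => hzx hzT.2⟩, fun hzT => hzc (hzT.2.trans hyT.2.symm)⟩, hzc, hzv⟩
  have hkeep : ∀ z ∈ A, cell z ≠ cell x → val z ≠ val x → val z ≠ val x →
      z ∈ ((A \ T₁) \ T₂) \ {x} := fun z hz hzc hzv _ =>
    ⟨⟨⟨hz, fun hzT => hzv hzT.2⟩, fun hzT => hzc hzT.2⟩, fun hzx => hzv (congrArg val hzx)⟩
  refine isMorseBuilt_fillingComplex_of_vertex ⟨⟨hxA, fun hxT => hxT.1 rfl⟩, fun hxT => hxT.1 rfl⟩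
    hA (fun hcol => ?_) (hlink x rfl he _ hkeep)
  exact ih _ (hcard he.mem_ground) (by rwa [eRank_deleteElem hcol])
    (h.remove_cell hinj hκ he.mem_ground rfl rfl hkeep) rfl

end Filling

section FullFibers

open scoped Matroid

variable {α ι : Type*} [Finite α] {f : α → ι} {s t : ℕ}

/-- The matroid of transversals of the fibers of `f` with at most `t` elements. -/
def partialTransversalMatroid (f : α → ι) (t : ℕ) : Matroid α :=
  (IndepMatroid.ofFinite Set.finite_univ (fun I => Set.InjOn f I ∧ I.ncard ≤ t)
    (by simp) (fun I J hJ hIJ => ⟨hJ.1.mono hIJ, (Set.ncard_le_ncard hIJ).trans hJ.2⟩)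
    (fun I J hI hJ hIJ => by
      obtain ⟨_, ⟨e, heJ, rfl⟩, heI⟩ := Set.exists_mem_notMem_of_ncard_lt_ncard
        (s := f '' I) (t := f '' J) (by rwa [hI.1.ncard_image, hJ.1.ncard_image])
      have heI' : e ∉ I := fun h => heI (Set.mem_image_of_mem f h)
      refine ⟨e, heJ, heI', (Set.injOn_insert heI').2 ⟨hI.1, heI⟩, ?_⟩
      rw [Set.ncard_insert_of_notMem heI']
      lia)
    (fun I _ => Set.subset_univ I)).matroid

theorem partialTransversalMatroid_isBase_iff [Finite ι] (hf : Function.Surjective f)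
    (ht : t ≤ Nat.card ι) {B : Set α} :
    (partialTransversalMatroid f t).IsBase B ↔ Set.InjOn f B ∧ B.ncard = t := by
  have hindep (I : Set α) :
      (partialTransversalMatroid f t).Indep I ↔ Set.InjOn f I ∧ I.ncard ≤ t := Iff.rfl
  constructor
  · intro hB
    obtain ⟨hinj, hcard⟩ := (hindep B).1 hB.indep
    refine ⟨hinj, hcard.antisymm (not_lt.1 fun hlt => ?_)⟩
    obtain ⟨i, hi⟩ : ∃ i, i ∉ f '' B := by
      by_contra! h
      have := hinj.ncard_image
      rw [Set.eq_univ_of_forall h, Set.ncard_univ] at this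
      lia
    obtain ⟨e, rfl⟩ := hf i
    have heB : e ∉ B := fun h => hi (Set.mem_image_of_mem f h)
    refine heB (hB.mem_of_insert_indep ((hindep _).2 ⟨(Set.injOn_insert heB).2 ⟨hinj, hi⟩, ?_⟩))
    rw [Set.ncard_insert_of_notMem heB]
    lia
  · rintro ⟨hinj, rfl⟩
    refine ((hindep B).2 ⟨hinj, le_rfl⟩).isBase_of_forall_insert fun e he h => ?_
    have := ((hindep _).1 h).2
    rw [Set.ncard_insert_of_notMem he.2] at this
    lia

/-- The matroid whose independent sets contain at most `s` fibers of `f` entirely. -/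
def fewFullFibersMatroid (f : α → ι) (s : ℕ) : Matroid α :=
  (partialTransversalMatroid f (Nat.card ι - s))✶

theorem fewFullFibersMatroid_indep_iff [Finite ι] (hf : Function.Surjective f) {X : Set α} :
    (fewFullFibersMatroid f s).Indep X ↔ {i | f ⁻¹' {i} ⊆ X}.ncard ≤ s := by
  have hcompl : {i | f ⁻¹' {i} ⊆ X}.ncard + (f '' Xᶜ).ncard = Nat.card ι := by
    rw [← Set.ncard_add_ncard_compl {i | f ⁻¹' {i} ⊆ X}]
    congr 2
    ext i
    simp [Set.subset_def, and_comm]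
  rw [fewFullFibersMatroid, Matroid.dual_indep_iff_exists (Set.subset_univ X)]
  simp only [partialTransversalMatroid_isBase_iff hf (Nat.sub_le _ s)]
  constructor
  · rintro ⟨B, ⟨hinj, hcard⟩, hB⟩
    have : (f '' B).ncard ≤ (f '' Xᶜ).ncard :=
      Set.ncard_le_ncard (Set.image_mono (Set.subset_compl_iff_disjoint_left.2 hB))
    rw [hinj.ncard_image] at this
    lia
  · intro hX
    obtain ⟨J, hJ, hJcard⟩ := Set.exists_subset_card_eq
      (show Nat.card ι - s ≤ (f '' Xᶜ).ncard by lia)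
    obtain ⟨B, hBX, hB⟩ := Set.exists_subset_bijOn (s := Xᶜ ∩ f ⁻¹' J) f
    have hBJ : f '' B = J := by
      rw [hB.image_eq, Set.image_inter_preimage, Set.inter_eq_right.2 hJ]
    refine ⟨B, ⟨hB.injOn, ?_⟩,
      Set.subset_compl_iff_disjoint_left.1 (hBX.trans Set.inter_subset_left)⟩
    rw [← hB.injOn.ncard_image, hBJ, hJcard]

theorem eRank_fewFullFibersMatroid [Finite ι] (hf : Function.Surjective f) :
    (fewFullFibersMatroid f s).eRank + (Nat.card ι - s : ℕ) = (Nat.card α : ℕ∞) := by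
  obtain ⟨B, hB⟩ := (partialTransversalMatroid f (Nat.card ι - s)).exists_isBase
  have hcard := ((partialTransversalMatroid_isBase_iff hf (Nat.sub_le _ s)).1 hB).2
  have h := (partialTransversalMatroid f (Nat.card ι - s)).eRank_add_eRank_dual
  have hE : (partialTransversalMatroid f (Nat.card ι - s)).E = Set.univ := rfl
  rwa [← hB.encard_eq_eRank, ← (Set.toFinite B).cast_ncard_eq, hcard, add_comm, hE,
    ← Set.finite_univ.cast_ncard_eq, Set.ncard_univ] at h

end FullFibers

section ConfigurationComplex

variable {m r k s : ℕ} {C : Fin (k + 1) → Finset (Fin m)} {col : Fin m → Fin (k + 1)}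

theorem card_row_eq_iff_fiber_subset {S : Finset (Fin m × Fin r)}
    (hS : Set.InjOn (fun q : Fin m × Fin r => (q.2, col q.1)) S) (i : Fin r) :
    (S.filter fun q => q.2 = i).card = k + 1 ↔
      Prod.fst ⁻¹' {i} ⊆ (fun q : Fin m × Fin r => (q.2, col q.1)) '' S := by
  have hinj : Set.InjOn (fun q : Fin m × Fin r => col q.1) (S.filter fun q => q.2 = i) := by
    intro q hq q' hq' h
    simp only [Finset.coe_filter, Set.mem_ofPred_eq] at hq hq'
    exact hS hq.1 hq'.1 (Prod.ext (hq.2.trans hq'.2.symm) h)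
  have hfull (T : Finset (Fin (k + 1))) : T.card = k + 1 ↔ ∀ c, c ∈ T := by
    rw [← Finset.eq_univ_iff_forall, ← Finset.card_eq_iff_eq_univ, Fintype.card_fin]
  rw [← Finset.card_image_of_injOn hinj, hfull]
  simp only [Finset.mem_image, Finset.mem_filter, Set.subset_def, Set.mem_preimage,
    Set.mem_singleton_iff, Set.mem_image, SetLike.mem_coe, Prod.forall, Prod.mk.injEq, and_assoc]
  exact ⟨fun h a b ha => ha ▸ h b, fun h c => h i c rfl⟩

theorem isConfSimplex_iff_mem_fillingComplex (hcol : ∀ v c, v ∈ C c ↔ col v = c)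
    (S : Finset (Fin m × Fin r)) :
    IsConfSimplex m r k s C S ↔ S ∈ fillingComplex (fewFullFibersMatroid Prod.fst s)
      (fun q : Fin m × Fin r => (q.2, col q.1)) Prod.fst Set.univ := by
  have hdisj : (∀ v, ∀ i j, (v, i) ∈ S → (v, j) ∈ S → i = j) ↔
      Set.InjOn Prod.fst (S : Set (Fin m × Fin r)) := by
    simp only [Set.InjOn, SetLike.mem_coe, Prod.forall, Prod.mk.injEq]
    grind
  have hrainbow : (∀ i c, (S.filter fun q => q.2 = i ∧ q.1 ∈ C c).card ≤ 1) ↔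
      Set.InjOn (fun q : Fin m × Fin r => (q.2, col q.1)) S := by
    simp only [Finset.card_le_one, Finset.mem_filter, hcol, Set.InjOn, SetLike.mem_coe,
      Prod.mk.injEq]
    exact ⟨fun h q hq q' hq' he => h _ _ q ⟨hq, rfl, rfl⟩ q' ⟨hq', he.1.symm, he.2.symm⟩,
      fun h i c q hq q' hq' =>
        h hq.1 hq'.1 ⟨hq.2.1.trans hq'.2.1.symm, hq.2.2.trans hq'.2.2.symm⟩⟩
  simp only [IsConfSimplex, hdisj, hrainbow, fillingComplex, Set.mem_ofPred_eq, Set.subset_univ,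
    true_and, fewFullFibersMatroid_indep_iff Prod.fst_surjective]
  rw [and_left_comm]
  refine and_congr_right fun hS => and_congr_right fun _ => ?_
  rw [← Set.ncard_coe_finset, Finset.coe_filter]
  simp only [Finset.mem_univ, true_and, card_row_eq_iff_fiber_subset hS]

theorem hasLongLists_configuration (hcol : ∀ v c, v ∈ C c ↔ col v = c)
    (hCcard : ∀ i, 2 * r ≤ (C i).card + 1) :
    HasLongLists (fewFullFibersMatroid (Prod.fst : Fin r × Fin (k + 1) → Fin r) s)
      (fun q : Fin m × Fin r => (q.2, col q.1)) Prod.snd Set.univ := by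
  rintro ⟨i, c⟩ -
  have hclass : {e' ∈ (fewFullFibersMatroid (Prod.fst : Fin r × Fin (k + 1) → Fin r) s).E |
      e'.2 = c} = (fun i' => (i', c)) '' Set.univ := by
    ext ⟨i', c'⟩
    simp [fewFullFibersMatroid, partialTransversalMatroid, eq_comm]
  have hlist : {q ∈ (Set.univ : Set (Fin m × Fin r)) | (q.2, col q.1) = (i, c)} =
      (fun v => (v, i)) '' (C c : Set (Fin m)) := by
    ext ⟨v, i'⟩
    simp [hcol, eq_comm, and_comm]
  rw [hlist, hclass, Set.ncard_image_of_injective _ (Prod.mk_left_injective c),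
    Set.ncard_image_of_injective _ (Prod.mk_left_injective i), Set.ncard_univ, Nat.card_fin,
    Set.ncard_coe_finset]
  exact hCcard c

theorem isMorseBuilt_isConfSimplex (hs : s ≤ r) (hCpart : ∀ v, ∃! i, v ∈ C i)
    (hCcard : ∀ i, 2 * r ≤ (C i).card + 1) :
    IsMorseBuilt (r * k + s) {S | IsConfSimplex m r k s C S} := by
  choose col hmem huniq using hCpart
  have hcol (v : Fin m) (c : Fin (k + 1)) : v ∈ C c ↔ col v = c :=
    ⟨fun h => (huniq v c h).symm, fun h => h ▸ hmem v⟩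
  simp only [isConfSimplex_iff_mem_fillingComplex hcol, Set.ofPred_mem_eq]
  refine isMorseBuilt_fillingComplex ?_ (fun q q' h => ?_) (fun q q' h => congrArg col h)
    (hasLongLists_configuration hcol hCcard)
  · have hrank := eRank_fewFullFibersMatroid (s := s)
      (Prod.fst_surjective : Function.Surjective (Prod.fst : Fin r × Fin (k + 1) → Fin r))
    rw [Nat.card_fin, Nat.card_prod, Nat.card_fin, Nat.card_fin] at hrank
    refine (ENat.add_le_add_iff_right (ENat.natCast_ne_top (r - s))).1 (le_of_eq ?_)
    rw [hrank]
    norm_cast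
    rw [mul_add]
    lia
  · exact Prod.ext (Prod.ext_iff.1 h).2 (Prod.ext_iff.1 (Prod.ext_iff.1 h).1).1

end ConfigurationComplex

section Realization

variable {V : Type*} [Fintype V] {K : Set (Finset V)}

/-- The support of a point, i.e. the smallest face of the standard simplex containing it. -/
def supportFinset (x : V → ℝ) : Finset V := {i | x i ≠ 0}

/-- The geometric realization of a simplicial complex inside the standard simplex. -/
def realization (K : Set (Finset V)) : Set (V → ℝ) := {x ∈ stdSimplex ℝ V | supportFinset x ∈ K}

theorem supportFinset_subset_iff {x : V → ℝ} {F : Finset V} :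
    supportFinset x ⊆ F ↔ ∀ i ∉ F, x i = 0 := by
  simp only [supportFinset, Finset.subset_iff, Finset.mem_filter, Finset.mem_univ, true_and]
  exact forall_congr' fun i => not_imp_comm

theorem realization_mono {L : Set (Finset V)} (h : K ⊆ L) : realization K ⊆ realization L :=
  fun _ hx => ⟨hx.1, h hx.2⟩

theorem homotopic_of_common_face {S : Type*} [TopologicalSpace S] (hK : IsLowerSet K)
    (f g : C(S, realization K))
    (h : ∀ s, ∃ F ∈ K, supportFinset (f s).1 ⊆ F ∧ supportFinset (g s).1 ⊆ F) :
    f.Homotopic g := by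
  let H : C(unitInterval × S, V → ℝ) :=
    ⟨fun p => AffineMap.lineMap (f p.2).1 (g p.2).1 (p.1 : ℝ), by
      simp only [AffineMap.lineMap_apply]
      fun_prop⟩
  have hH (p : unitInterval × S) : H p ∈ realization K := by
    obtain ⟨F, hF, hf, hg⟩ := h p.2
    rw [supportFinset_subset_iff] at hf hg
    refine ⟨(convex_stdSimplex ℝ V).lineMap_mem (f p.2).2.1 (g p.2).2.1 p.1.2,
      hK (supportFinset_subset_iff.2 fun i hi => ?_) hF⟩
    simp [H, AffineMap.lineMap_apply, hf i hi, hg i hi]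
  exact ⟨⟨⟨fun p => ⟨H p, hH p⟩, H.continuous.subtype_mk hH⟩,
    fun s => Subtype.ext (AffineMap.lineMap_apply_zero _ _),
    fun s => Subtype.ext (AffineMap.lineMap_apply_one _ _)⟩⟩

theorem nullhomotopic_of_common_face {S : Type*} [TopologicalSpace S] {L : Set (Finset V)}
    (hL : IsLowerSet L) (hKL : K ⊆ L) (hnull : ∀ g : C(S, realization K), g.Nullhomotopic)
    (f : C(S, realization L)) {g : S → V → ℝ} (hg : Continuous g) (hgK : ∀ s, g s ∈ realization K)
    (h : ∀ s, ∃ F ∈ L, supportFinset (f s).1 ⊆ F ∧ supportFinset (g s) ⊆ F) :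
    f.Nullhomotopic := by
  let ι : C(realization K, realization L) := ⟨_, continuous_inclusion (realization_mono hKL)⟩
  obtain ⟨y, hy⟩ := (hnull ⟨fun s => ⟨g s, hgK s⟩, hg.subtype_mk hgK⟩).comp_right ι
  exact ⟨y, (homotopic_of_common_face hL f _ h).trans hy⟩

end Realization

section RadialProjection

variable {V : Type*} {R F : Finset V} {x y : V → ℝ}

/-- The largest `t` such that `x - t • y` is still nonnegative on `R`. -/
def projectionParam (hR : R.Nonempty) (y x : V → ℝ) : ℝ := R.inf' hR fun i => x i / y i

/-- The point where the ray from `y` through `x` meets the faces not containing `R`. -/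
def radialProjection (hR : R.Nonempty) (y x : V → ℝ) : V → ℝ :=
  (1 - projectionParam hR y x)⁻¹ • (x - projectionParam hR y x • y)

theorem continuous_projectionParam (hR : R.Nonempty) (y : V → ℝ) :
    Continuous (projectionParam hR y) := by
  unfold projectionParam
  fun_prop

variable [Fintype V]

/-- A centre `y` from which the simplex `F` can be projected onto its faces not containing `R`.
For `R = F` it is an interior point of the simplex; for `R ≠ F` it may lie outside, beyond `R`. -/
structure IsProjectionCentre (R F : Finset V) (y : V → ℝ) : Prop where
  pos : ∀ i ∈ R, 0 < y i
  nonpos : ∀ i ∉ R, y i ≤ 0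
  eq_zero : ∀ i ∉ F, y i = 0
  sum_eq_one : ∑ i, y i = 1

theorem exists_isProjectionCentre_notMem_stdSimplex (hR : R.Nonempty) (hRF : R ⊂ F) :
    ∃ y, IsProjectionCentre R F y ∧ y ∉ stdSimplex ℝ V := by
  obtain ⟨j, hjF, hjR⟩ := Finset.exists_of_ssubset hRF
  have hcard : (0 : ℝ) < R.card := Nat.cast_pos.2 hR.card_pos
  refine ⟨fun i => (if i ∈ R then 2 / (R.card : ℝ) else 0) - if i = j then 1 else 0,
    ⟨fun i hi => ?_, fun i hi => ?_, fun i hi => ?_, ?_⟩, fun h => ?_⟩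
  · rw [if_pos hi, if_neg (ne_of_mem_of_not_mem hi hjR), sub_zero]
    exact div_pos two_pos hcard
  · rw [if_neg hi, zero_sub, neg_nonpos]
    split_ifs <;> norm_num
  · rw [if_neg fun h => hi (hRF.subset h), if_neg (ne_of_mem_of_not_mem hjF hi).symm, sub_zero]
  · rw [Finset.sum_sub_distrib, Finset.sum_ite_mem, Finset.univ_inter, Finset.sum_const,
      nsmul_eq_mul, Finset.sum_ite_eq' Finset.univ j, if_pos (Finset.mem_univ j)]
    field_simp
    norm_num
  · have := h.1 j
    simp only [if_neg hjR, if_true] at this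
    linarith

theorem exists_isProjectionCentre_extending {i₀ : V} (hi₀ : i₀ ∈ F)
    {z : F.erase i₀ → ℝ} (hz : ∀ i, 0 < z i) (hzsum : ∑ i, z i < 1) :
    ∃ y, IsProjectionCentre F F y ∧ ∀ i : F.erase i₀, y i = z i := by
  let w : V → ℝ := fun i => if h : i ∈ F.erase i₀ then z ⟨i, h⟩ else 0
  have hw (i : F.erase i₀) : w i = z i := dif_pos i.2
  have hw' (i : V) (hi : i ∉ F.erase i₀) : w i = 0 := dif_neg hi
  have hwsum : ∑ i, w i = ∑ i, z i := by
    rw [← Finset.sum_subset (Finset.subset_univ (F.erase i₀)) fun i _ => hw' i,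
      ← Finset.sum_coe_sort]
    exact Finset.sum_congr rfl fun i _ => hw i
  have hy (i : F.erase i₀) : (w + Pi.single i₀ (1 - ∑ j, z j) : V → ℝ) i = z i := by
    rw [Pi.add_apply, hw, Pi.single_eq_of_ne (Finset.ne_of_mem_erase i.2), add_zero]
  have hy' (i : V) (hi : i ∉ F) : (w + Pi.single i₀ (1 - ∑ j, z j) : V → ℝ) i = 0 := by
    rw [Pi.add_apply, hw' i fun h => hi (Finset.mem_of_mem_erase h),
      Pi.single_eq_of_ne (ne_of_mem_of_not_mem hi₀ hi).symm, add_zero]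
  refine ⟨w + Pi.single i₀ (1 - ∑ j, z j),
    ⟨fun i hi => ?_, fun i hi => (hy' i hi).le, hy', ?_⟩, hy⟩
  · rcases eq_or_ne i i₀ with rfl | hne
    · rw [Pi.add_apply, hw' i (Finset.notMem_erase i F), Pi.single_eq_same]
      linarith
    · exact (hz _).trans_eq (hy ⟨i, Finset.mem_erase.2 ⟨hne, hi⟩⟩).symm
  · simp only [Pi.add_apply]
    rw [Finset.sum_add_distrib, hwsum, Finset.sum_pi_single', if_pos (Finset.mem_univ i₀)]
    linarith

namespace IsProjectionCentre

theorem projectionParam_smul_le (h : IsProjectionCentre R F y) (hR : R.Nonempty)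
    (hx : x ∈ stdSimplex ℝ V) : projectionParam hR y x • y ≤ x := by
  intro i
  rw [Pi.smul_apply, smul_eq_mul]
  by_cases hi : i ∈ R
  · exact (le_div_iff₀ (h.pos i hi)).1 (Finset.inf'_le _ hi)
  · exact (mul_nonpos_of_nonneg_of_nonpos (Finset.le_inf' _ _ fun j hj =>
      div_nonneg (hx.1 j) (h.pos j hj).le) (h.nonpos i hi)).trans (hx.1 i)

theorem projectionParam_lt_one (h : IsProjectionCentre R F y) (hR : R.Nonempty)
    (hx : x ∈ stdSimplex ℝ V) (hxy : x ≠ y) : projectionParam hR y x < 1 := by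
  by_contra! ht
  have hle (i : V) : y i ≤ x i := by
    by_cases hi : i ∈ R
    · exact (le_mul_of_one_le_left (h.pos i hi).le ht).trans (h.projectionParam_smul_le hR hx i)
    · exact (h.nonpos i hi).trans (hx.1 i)
  have heq := (Finset.sum_eq_sum_iff_of_le fun i _ => hle i).1 (h.sum_eq_one.trans hx.2.symm)
  exact hxy (funext fun i => (heq i (Finset.mem_univ i)).symm)

theorem radialProjection_mem_stdSimplex (h : IsProjectionCentre R F y) (hR : R.Nonempty)
    (hx : x ∈ stdSimplex ℝ V) (hxy : x ≠ y) : radialProjection hR y x ∈ stdSimplex ℝ V := by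
  have ht := sub_pos.2 (h.projectionParam_lt_one hR hx hxy)
  refine ⟨fun i => mul_nonneg (inv_nonneg.2 ht.le) ?_, ?_⟩
  · exact sub_nonneg.2 (h.projectionParam_smul_le hR hx i)
  · simp only [radialProjection, Pi.smul_apply, Pi.sub_apply, smul_eq_mul]
    rw [← Finset.mul_sum, Finset.sum_sub_distrib, ← Finset.mul_sum, hx.2, h.sum_eq_one, mul_one]
    exact inv_mul_cancel₀ ht.ne'

theorem supportFinset_radialProjection_subset (h : IsProjectionCentre R F y) (hR : R.Nonempty)
    (hxF : supportFinset x ⊆ F) : supportFinset (radialProjection hR y x) ⊆ F := by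
  rw [supportFinset_subset_iff] at hxF ⊢
  intro i hi
  simp [radialProjection, hxF i hi, h.eq_zero i hi]

theorem not_subset_supportFinset_radialProjection (h : IsProjectionCentre R F y)
    (hR : R.Nonempty) (x : V → ℝ) : ¬R ⊆ supportFinset (radialProjection hR y x) := by
  obtain ⟨i, hi, hmin⟩ := Finset.exists_mem_eq_inf' hR fun i => x i / y i
  intro hsub
  refine (Finset.mem_filter.1 (hsub hi)).2 ?_
  rw [radialProjection, projectionParam, hmin]
  simp [div_mul_cancel₀ (x i) (h.pos i hi).ne']

theorem radialProjection_eq_self (h : IsProjectionCentre R F y) (hR : R.Nonempty)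
    (hx : x ∈ stdSimplex ℝ V) (hRx : ¬R ⊆ supportFinset x) : radialProjection hR y x = x := by
  obtain ⟨i, hi, hxi⟩ := Finset.not_subset.1 hRx
  have hxi : x i = 0 := by simpa [supportFinset] using hxi
  have ht : projectionParam hR y x = 0 := by
    refine le_antisymm ?_ (Finset.le_inf' _ _ fun j hj => div_nonneg (hx.1 j) (h.pos j hj).le)
    exact (Finset.inf'_le _ hi).trans_eq (by rw [hxi, zero_div])
  simp [radialProjection, ht]

theorem nullhomotopic {S : Type*} [TopologicalSpace S] {K : Set (Finset V)}
    (h : IsProjectionCentre R F y) (hK : IsLowerSet K) (hR : R.Nonempty) (hRF : R ⊆ F)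
    (hRK : R ∉ K) (hF : ∀ S ⊆ F, ¬R ⊆ S → S ∈ K)
    (hnull : ∀ g : C(S, realization K), g.Nullhomotopic)
    (f : C(S, realization (K ∪ Set.Icc R F))) (hfy : ∀ s, (f s).1 ≠ y) : f.Nullhomotopic := by
  have hlower := isLowerSet_union_Icc hK hF
  have hRx {x : V → ℝ} (hx : supportFinset x ∈ K) : ¬R ⊆ supportFinset x := fun hR =>
    hRK (hK hR hx)
  have hcont : Continuous fun s => radialProjection hR y (f s).1 := by
    have ht : Continuous fun s => projectionParam hR y (f s).1 :=
      (continuous_projectionParam hR y).comp (by fun_prop)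
    have hne (s : S) : 1 - projectionParam hR y (f s).1 ≠ 0 :=
      (sub_pos.2 (h.projectionParam_lt_one hR (f s).2.1 (hfy s))).ne'
    unfold radialProjection
    fun_prop (disch := exact hne)
  refine nullhomotopic_of_common_face hlower Set.subset_union_left hnull f hcont (fun s => ?_)
    (fun s => ?_) <;> rcases (f s).2.2 with hs | hs
  · rw [h.radialProjection_eq_self hR (f s).2.1 (hRx hs)]
    exact ⟨(f s).2.1, hs⟩
  · exact ⟨h.radialProjection_mem_stdSimplex hR (f s).2.1 (hfy s),
      hF _ (h.supportFinset_radialProjection_subset hR hs.2)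
        (h.not_subset_supportFinset_radialProjection hR _)⟩
  · rw [h.radialProjection_eq_self hR (f s).2.1 (hRx hs)]
    exact ⟨_, Or.inl hs, le_rfl, le_rfl⟩
  · exact ⟨F, Or.inr ⟨hRF, le_rfl⟩, hs.2, h.supportFinset_radialProjection_subset hR hs.2⟩

end IsProjectionCentre

end RadialProjection

section GeneralPosition

theorem dense_setOf_lipschitzWith (S : Type*) [MetricSpace S] [CompactSpace S] :
    Dense {f : C(S, ℝ) | ∃ L, LipschitzWith L f} := by
  refine dense_iff_closure_eq.2 (ContinuousMap.sublattice_closure_eq_top _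
    ⟨0, 0, LipschitzWith.const 0⟩ ?_ ?_ fun v x y => ?_)
  · rintro f ⟨L, hf⟩ g ⟨M, hg⟩
    exact ⟨max L M, hf.min hg⟩
  · rintro f ⟨L, hf⟩ g ⟨M, hg⟩
    exact ⟨max L M, hf.max hg⟩
  · have hlip : LipschitzWith (0 + ‖(v y - v x) / dist y x‖₊ * 1)
        fun z => v x + ((v y - v x) / dist y x) • dist z x :=
      (LipschitzWith.const (v x)).add
        ((lipschitzWith_smul ((v y - v x) / dist y x)).comp (LipschitzWith.dist_left x))
    refine ⟨⟨_, hlip.continuous⟩, ⟨_, hlip⟩, by simp, ?_⟩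
    rcases eq_or_ne y x with rfl | hyx
    · simp
    · simp [div_mul_cancel₀ _ (dist_ne_zero.2 hyx)]

variable {S V : Type*} [Fintype V] [MetricSpace S] [CompactSpace S]

theorem exists_lipschitzWith_dist_lt {f : S → V → ℝ} (hf : Continuous f) {ε : ℝ} (hε : 0 < ε) :
    ∃ (L : NNReal) (g : S → V → ℝ), LipschitzWith L g ∧ ∀ s i, dist (g s i) (f s i) < ε := by
  have happrox (i : V) : ∃ g : C(S, ℝ), (∃ L, LipschitzWith L g) ∧ ∀ s, dist (g s) (f s i) < ε := by
    obtain ⟨g, hdist, hlip⟩ := Metric.dense_iff.1 (dense_setOf_lipschitzWith S)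
      ⟨fun s => f s i, by fun_prop⟩ ε hε
    exact ⟨g, hlip, (ContinuousMap.dist_lt_iff hε).1 hdist⟩
  choose g hlip hdist using happrox
  choose L hL using hlip
  refine ⟨∑ i, L i, fun s i => g i s, LipschitzWith.of_dist_le_mul fun x y => ?_,
    fun s i => hdist i s⟩
  refine (dist_pi_le_iff (by positivity)).2 fun i => ((hL i).dist_le_mul x y).trans ?_
  gcongr
  exact Finset.single_le_sum (fun _ _ => zero_le) (Finset.mem_univ i)

theorem exists_lipschitzWith_supportFinset_subset {f : S → V → ℝ} (hf : Continuous f)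
    (hfmem : ∀ s, f s ∈ stdSimplex ℝ V) :
    ∃ (L : NNReal) (g : S → V → ℝ), LipschitzWith L g ∧ ∀ s, 0 ≤ g s ∧ 0 < ∑ i, g s i ∧
      supportFinset (g s) ⊆ supportFinset (f s) := by
  obtain ⟨ε, hε, hεV⟩ : ∃ ε : ℝ, 0 < ε ∧ 2 * ε * Fintype.card V < 1 := by
    refine ⟨(2 * Fintype.card V + 1)⁻¹, by positivity, ?_⟩
    rw [mul_right_comm, mul_inv_lt_iff₀ (by positivity)]
    linarith
  obtain ⟨L, g, hL, hg⟩ := exists_lipschitzWith_dist_lt hf hε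
  simp only [Real.dist_eq, abs_lt] at hg
  have hthreshold : LipschitzWith 1 fun (z : V → ℝ) i => max (z i - ε) 0 := by
    refine LipschitzWith.of_dist_le_mul fun z w => ?_
    rw [NNReal.coe_one, one_mul, dist_pi_le_iff dist_nonneg]
    intro i
    refine (abs_max_sub_max_le_abs _ _ _).trans ?_
    rw [sub_sub_sub_cancel_right]
    exact dist_le_pi_dist z w i
  refine ⟨1 * L, _, hthreshold.comp hL, fun s => ⟨fun i => le_max_right _ _, ?_, ?_⟩⟩
  · calc 0 < ∑ i, (f s i - 2 * ε) := by
          rw [Finset.sum_sub_distrib, (hfmem s).2, Finset.sum_const, Finset.card_univ,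
            nsmul_eq_mul, mul_comm]
          linarith
      _ ≤ ∑ i, max (g s i - ε) 0 := Finset.sum_le_sum fun i _ =>
          le_max_of_le_left (by linarith [(hg s i).1])
  · rw [supportFinset_subset_iff]
    intro i hi
    have hfi : f s i = 0 := supportFinset_subset_iff.1 le_rfl i hi
    exact max_eq_right (by linarith [(hg s i).2])

theorem dimH_image_normalize_le {A : Set (V → ℝ)} (hA : A ⊆ {z | 0 < ∑ i, z i}) :
    dimH ((fun z => (∑ i, z i)⁻¹ • z) '' A) ≤ dimH A := by
  refine ContDiffOn.dimH_image_le ?_ ?_ hA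
  · have hsum : ContDiff ℝ 1 fun z : V → ℝ => ∑ i, z i := by fun_prop
    exact (hsum.contDiffOn.inv fun z hz => ne_of_gt hz).smul contDiffOn_id
  · exact convex_halfSpace_gt ⟨fun x y => Finset.sum_add_distrib, fun c x => by
      simp [Finset.mul_sum]⟩ 0

theorem exists_homotopic_dimH_range_le {K : Set (Finset V)} (hK : IsLowerSet K)
    (f : C(S, realization K)) : ∃ g : C(S, realization K), f.Homotopic g ∧
      dimH (Set.range fun s => (g s).1) ≤ dimH (Set.univ : Set S) := by
  obtain ⟨L, h, hL, hh⟩ := exists_lipschitzWith_supportFinset_subset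
    (continuous_subtype_val.comp f.continuous) fun s => (f s).2.1
  have hsupp (s : S) : supportFinset ((∑ i, h s i)⁻¹ • h s) ⊆ supportFinset (f s).1 := by
    refine subset_trans ?_ (hh s).2.2
    rw [supportFinset_subset_iff]
    intro i hi
    simp [supportFinset_subset_iff.1 le_rfl i hi]
  have hmem (s : S) : (∑ i, h s i)⁻¹ • h s ∈ realization K := by
    refine ⟨⟨fun i => mul_nonneg (inv_nonneg.2 (hh s).2.1.le) ((hh s).1 i), ?_⟩,
      hK (hsupp s) (f s).2.2⟩
    simp only [Pi.smul_apply, smul_eq_mul]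
    rw [← Finset.mul_sum, inv_mul_cancel₀ (hh s).2.1.ne']
  have hcont : Continuous fun s => (∑ i, h s i)⁻¹ • h s := by
    have := hL.continuous
    fun_prop (disch := exact fun s => (hh s).2.1.ne')
  refine ⟨⟨fun s => ⟨_, hmem s⟩, hcont.subtype_mk hmem⟩, homotopic_of_common_face hK f _
    fun s => ⟨_, (f s).2.2, le_rfl, hsupp s⟩, ?_⟩
  have := dimH_image_normalize_le (Set.range_subset_iff.2 fun s => (hh s).2.1)
  rw [← Set.range_comp] at this
  exact this.trans hL.dimH_range_le

theorem exists_isProjectionCentre_notMem {F : Finset V} (hF : F.Nonempty) {A : Set (V → ℝ)}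
    (hA : dimH A < (F.card - 1 : ℕ)) : ∃ y ∉ A, IsProjectionCentre F F y := by
  obtain ⟨i₀, hi₀⟩ := hF
  let π : (V → ℝ) → (F.erase i₀ → ℝ) := fun x i => x i
  have hπ : LipschitzWith 1 π := LipschitzWith.of_dist_le_mul fun x y => by
    rw [NNReal.coe_one, one_mul, dist_pi_le_iff dist_nonneg]
    exact fun i => dist_le_pi_dist x y i
  have hdense : Dense (π '' A)ᶜ := by
    refine dense_compl_of_dimH_lt_finrank ((hπ.dimH_image_le A).trans_lt ?_)
    rwa [Module.finrank_fintype_fun_eq_card, Fintype.card_coe, Finset.card_erase_of_mem hi₀]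
  have hopen : IsOpen {z : F.erase i₀ → ℝ | (∀ i, 0 < z i) ∧ ∑ i, z i < 1} := by
    simp only [Set.ofPred_and, Set.ofPred_forall]
    exact (isOpen_iInter_of_finite fun i => isOpen_lt (by fun_prop) (by fun_prop)).inter
      (isOpen_lt (by fun_prop) (by fun_prop))
  have hcard : ((F.erase i₀).card : ℝ) + 1 = F.card :=
    mod_cast Finset.card_erase_add_one hi₀
  obtain ⟨z, ⟨hz, hzsum⟩, hzA⟩ := hdense.inter_open_nonempty _ hopen
    ⟨fun _ => (F.card : ℝ)⁻¹, fun _ => by rw [← hcard]; positivity, by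
      rw [Finset.sum_const, Finset.card_univ, Fintype.card_coe, nsmul_eq_mul, ← hcard,
        mul_inv_lt_iff₀ (by positivity)]
      linarith⟩
  obtain ⟨y, hy, hyz⟩ := exists_isProjectionCentre_extending hi₀ hz hzsum
  exact ⟨y, fun h => hzA ⟨y, h, funext hyz⟩, hy⟩

end GeneralPosition

section MorseConnectivity

variable {V : Type*} [Fintype V] {n : ℕ} {K : Set (Finset V)}

namespace IsMorseBuilt

theorem nonempty_realization (h : IsMorseBuilt n K) (hn : n ≠ 0) (hK : K.Nonempty) :
    (realization K).Nonempty := by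
  suffices ∃ v, {v} ∈ K by
    obtain ⟨v, hv⟩ := this
    refine ⟨Pi.single v 1, single_mem_stdSimplex ℝ v, h.isLowerSet ?_ hv⟩
    exact supportFinset_subset_iff.2 fun i hi => Pi.single_eq_of_ne (by simpa using hi) 1
  have hlower := h.isLowerSet
  cases h with
  | empty => exact (Set.not_nonempty_empty hK).elim
  | @addInterval K R F _ hRF hcard _ _ =>
    obtain rfl | ⟨v, hv⟩ := F.eq_empty_or_nonempty
    · exact (hn (Nat.le_zero.1 (hcard (Finset.subset_empty.1 hRF)))).elim
    · exact ⟨v, hlower (Finset.singleton_subset_iff.2 hv) (Or.inr ⟨hRF, le_rfl⟩)⟩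

theorem nullhomotopic {S : Type*} [MetricSpace S] [CompactSpace S] [Nonempty S]
    (hK : IsMorseBuilt n K) (hdim : dimH (Set.univ : Set S) < (n - 1 : ℕ))
    (f : C(S, realization K)) : f.Nullhomotopic := by
  induction hK with
  | empty => exact (f (Classical.arbitrary S)).2.2.elim
  | @addInterval K R F hK hRF hn hRK hF ih =>
    rcases R.eq_empty_or_nonempty with rfl | hR
    · have hsub {A : Finset V} (hA : A ∈ K ∪ Set.Icc ∅ F) : A ⊆ F :=
        hA.elim (fun h => (hRK (hK.isLowerSet (Finset.empty_subset A) h)).elim) And.right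
      let s₀ := Classical.arbitrary S
      exact ⟨f s₀, homotopic_of_common_face (isLowerSet_union_Icc hK.isLowerSet hF) _ _ fun s =>
        ⟨F, Or.inr ⟨hRF, le_rfl⟩, hsub (f s).2.2, hsub (f s₀).2.2⟩⟩
    rcases eq_or_ssubset_of_subset hRF with rfl | hRF'
    · have hcard : dimH (Set.univ : Set S) < (R.card - 1 : ℕ) :=
        hdim.trans_le (mod_cast Nat.sub_le_sub_right (hn rfl) 1)
      obtain ⟨g, hfg, hg⟩ :=
        exists_homotopic_dimH_range_le (isLowerSet_union_Icc hK.isLowerSet hF) f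
      obtain ⟨y, hyg, hy⟩ := exists_isProjectionCentre_notMem hR (hg.trans_lt hcard)
      obtain ⟨p, hp⟩ := hy.nullhomotopic hK.isLowerSet hR hRF hRK hF ih g fun s hs =>
        hyg ⟨s, hs⟩
      exact ⟨p, hfg.trans hp⟩
    · obtain ⟨y, hy, hyf⟩ := exists_isProjectionCentre_notMem_stdSimplex hR hRF'
      exact hy.nullhomotopic hK.isLowerSet hR hRF hRK hF ih f fun s hs => hyf (hs ▸ (f s).2.1)

end IsMorseBuilt

end MorseConnectivity

section HomotopyGroups

open unitInterval

section Ball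

variable {E : Type*} [NormedAddCommGroup E] [NormedSpace ℝ E]

variable (E) in
/-- The map `(t, y) ↦ (1 - t) • y` presenting the closed unit ball as the cone over the unit
sphere, with apex at `t = 1`. -/
def coneToBall : C(I × Metric.sphere (0 : E) 1, Metric.closedBall (0 : E) 1) where
  toFun a := ⟨(σ a.1 : ℝ) • a.2.1, by
    rw [mem_closedBall_zero_iff, norm_smul, norm_eq_of_mem_sphere, mul_one,
      Real.norm_of_nonneg (nonneg _)]
    exact le_one _⟩
  continuous_toFun := by fun_prop

theorem coneToBall_zero (y : Metric.sphere (0 : E) 1) :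
    coneToBall E (0, y) = Set.inclusion Metric.sphere_subset_closedBall y :=
  Subtype.ext (by simp [coneToBall])

theorem coneToBall_surjective [Nontrivial E] : Function.Surjective (coneToBall E) := by
  rintro ⟨y, hy⟩
  rw [mem_closedBall_zero_iff] at hy
  rcases eq_or_ne y 0 with rfl | hy0
  · obtain ⟨z, hz⟩ := NormedSpace.sphere_nonempty (x := (0 : E)).2 zero_le_one
    exact ⟨(1, ⟨z, hz⟩), Subtype.ext (by simp [coneToBall])⟩
  · refine ⟨(σ ⟨‖y‖, norm_nonneg y, hy⟩, ⟨‖y‖⁻¹ • y, ?_⟩), Subtype.ext ?_⟩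
    · simp [norm_smul, hy0]
    · simp [coneToBall, smul_smul, hy0]

theorem eq_or_eq_one_of_coneToBall_eq {a b : I × Metric.sphere (0 : E) 1}
    (h : coneToBall E a = coneToBall E b) : a = b ∨ a.1 = 1 ∧ b.1 = 1 := by
  obtain ⟨t, y⟩ := a
  obtain ⟨u, z⟩ := b
  have hsmul : (σ t : ℝ) • y.1 = (σ u : ℝ) • z.1 := congrArg Subtype.val h
  have hnorm := congrArg norm hsmul
  simp only [norm_smul, norm_eq_of_mem_sphere, mul_one, Real.norm_of_nonneg, nonneg] at hnorm
  obtain rfl : t = u := symm_bijective.injective (Subtype.ext hnorm)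
  rcases eq_or_ne t 1 with rfl | ht
  · exact .inr ⟨rfl, rfl⟩
  · have hσ : (σ t : ℝ) ≠ 0 := fun h0 => ht (symm_eq_zero.1 (Subtype.ext h0))
    rw [Subtype.ext (smul_right_injective E hσ hsmul)]
    exact .inl rfl

theorem exists_extension_closedBall [ProperSpace E] [Nontrivial E] {X : Type*}
    [TopologicalSpace X] {f : C(Metric.sphere (0 : E) 1, X)} (hf : f.Nullhomotopic) :
    ∃ g : C(Metric.closedBall (0 : E) 1, X),
      ∀ y, g (Set.inclusion Metric.sphere_subset_closedBall y) = f y := by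
  obtain ⟨p, ⟨H⟩⟩ := hf
  have hq : Topology.IsQuotientMap (coneToBall E) :=
    (coneToBall E).continuous.isClosedMap.isQuotientMap (coneToBall E).continuous
      coneToBall_surjective
  have hfac : ∀ a b, coneToBall E a = coneToBall E b → H a = H b := by
    rintro ⟨t, y⟩ ⟨u, z⟩ h
    obtain hab | ⟨rfl, rfl⟩ := eq_or_eq_one_of_coneToBall_eq h
    · rw [hab]
    · simp
  refine ⟨hq.lift H.toContinuousMap hfac, fun y => ?_⟩
  rw [← coneToBall_zero]
  exact (DFunLike.congr_fun (hq.lift_comp H.toContinuousMap hfac) (0, y)).trans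
    (H.map_zero_left y)

end Ball

theorem dimH_sphere_pi_le (j : ℕ) : dimH (Metric.sphere (0 : Fin (j + 1) → ℝ) 1) ≤ j := by
  let face (a : Fin (j + 1) × ℝ) (z : Fin j → ℝ) : Fin (j + 1) → ℝ :=
    Fin.insertNth (α := fun _ => ℝ) a.1 a.2 z
  have hface (a) : LipschitzWith 1 (face a) := LipschitzWith.of_dist_le_mul fun x y => by
    simp [face, Fin.dist_insertNth_insertNth]
  have hsub : Metric.sphere (0 : Fin (j + 1) → ℝ) 1 ⊆
      ⋃ a ∈ (Set.univ : Set (Fin (j + 1))) ×ˢ ({1, -1} : Set ℝ), Set.range (face a) := by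
    intro y hy
    obtain ⟨i, hi : ‖y i‖ = ‖y‖⟩ := (IsGreatest.pi_norm y).1
    rw [mem_sphere_zero_iff_norm.1 hy, Real.norm_eq_abs, abs_eq zero_le_one] at hi
    exact Set.mem_biUnion (x := (i, y i)) ⟨Set.mem_univ i, hi⟩
      ⟨i.removeNth y, Fin.insertNth_self_removeNth i y⟩
  refine (dimH_mono hsub).trans ?_
  rw [dimH_bUnion (Set.toFinite _).countable]
  refine iSup₂_le fun a _ => (hface a).dimH_range_le.trans ?_
  rw [Real.dimH_univ_pi_fin]

section Cube

variable {N : Type*} {X : Type*} [TopologicalSpace X]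

variable (N) in
/-- The coordinates on the cube `I^N` centred at its midpoint, in which it is the closed unit ball
of the supremum norm. -/
def cubeCoord : C(N → I, N → ℝ) where
  toFun u i := 2 * (u i : ℝ) - 1
  continuous_toFun := by fun_prop

variable (N) in
/-- The coordinatewise truncation of `ℝ^N` to the cube, a left inverse of `cubeCoord`. -/
def cubeTruncation : C(N → ℝ, N → I) where
  toFun y i := Set.projIcc 0 1 zero_le_one ((y i + 1) / 2)
  continuous_toFun := by
    refine continuous_pi fun i => continuous_projIcc.comp ?_
    fun_prop

theorem cubeTruncation_cubeCoord (u : N → I) : cubeTruncation N (cubeCoord N u) = u := by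
  ext i
  have h : (2 * (u i : ℝ) - 1 + 1) / 2 = u i := by ring
  simp only [cubeTruncation, cubeCoord, ContinuousMap.coe_mk, h, Set.projIcc_val]

variable [Fintype N]

theorem norm_cubeCoord_le (u : N → I) : ‖cubeCoord N u‖ ≤ 1 := by
  refine (pi_norm_le_iff_of_nonneg zero_le_one).2 fun i => abs_le.2 ⟨?_, ?_⟩ <;>
    dsimp only [cubeCoord, ContinuousMap.coe_mk] <;> linarith [nonneg (u i), le_one (u i)]

theorem norm_cubeCoord_of_mem_boundary {u : N → I} (hu : u ∈ Cube.boundary N) :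
    ‖cubeCoord N u‖ = 1 := by
  obtain ⟨i, hi⟩ := hu
  refine (norm_cubeCoord_le u).antisymm ?_
  have h : ‖cubeCoord N u i‖ = 1 := by rcases hi with h | h <;> norm_num [cubeCoord, h]
  exact h ▸ norm_le_pi_norm (cubeCoord N u) i

theorem cubeTruncation_mem_boundary [Nonempty N] {y : N → ℝ} (hy : ‖y‖ = 1) :
    cubeTruncation N y ∈ Cube.boundary N := by
  obtain ⟨i, hi : ‖y i‖ = ‖y‖⟩ := (IsGreatest.pi_norm y).1
  rw [hy, Real.norm_eq_abs, abs_eq zero_le_one] at hi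
  refine ⟨i, ?_⟩
  rcases hi with h | h <;> norm_num [cubeTruncation, h]

theorem exists_extension_cube [Nonempty N]
    (hX : ∀ f : C(Metric.sphere (0 : N → ℝ) 1, X), f.Nullhomotopic) (φ : C(Cube.boundary N, X)) :
    ∃ g : C(N → I, X), ∀ u : Cube.boundary N, g u = φ u := by
  let toBoundary : C(Metric.sphere (0 : N → ℝ) 1, Cube.boundary N) :=
    ⟨fun y => ⟨cubeTruncation N y, cubeTruncation_mem_boundary (norm_eq_of_mem_sphere y)⟩,
      by fun_prop⟩
  let toBall : C(N → I, Metric.closedBall (0 : N → ℝ) 1) :=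
    ⟨fun u => ⟨cubeCoord N u, mem_closedBall_zero_iff.2 (norm_cubeCoord_le u)⟩, by fun_prop⟩
  obtain ⟨g, hg⟩ := exists_extension_closedBall (hX (φ.comp toBoundary))
  refine ⟨g.comp toBall, fun u => ?_⟩
  refine (hg ⟨cubeCoord N u,
    mem_sphere_zero_iff_norm.2 (norm_cubeCoord_of_mem_boundary u.2)⟩).trans ?_
  exact congrArg φ (Subtype.ext (cubeTruncation_cubeCoord u.1))

end Cube

section GenLoop

variable {j : ℕ} {X : Type*} [TopologicalSpace X] {x : X}

theorem tail_mem_boundary {u : Fin (j + 1) → I} (hu : u ∈ Cube.boundary (Fin (j + 1)))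
    (h0 : u 0 ≠ 0) (h1 : u 0 ≠ 1) : Fin.tail u ∈ Cube.boundary (Fin j) := by
  obtain ⟨i, hi⟩ := hu
  rcases Fin.eq_zero_or_eq_succ i with rfl | ⟨i, rfl⟩
  · exact (hi.elim h0 h1).elim
  · exact ⟨i, hi⟩

-- The map on the boundary of the cube given by the loop on the bottom face and by the base point
-- on the other faces extends to the cube; the extension is the homotopy.
theorem genLoop_homotopic_const_of_extension
    (hX : ∀ φ : C(Cube.boundary (Fin (j + 1)), X),
      ∃ g : C(Fin (j + 1) → I, X), ∀ u : Cube.boundary (Fin (j + 1)), g u = φ u)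
    (f : GenLoop (Fin j) X x) : GenLoop.Homotopic f GenLoop.const := by
  let φ : C(Cube.boundary (Fin (j + 1)), X) :=
    ⟨fun u => if (u.1 0 : ℝ) ≤ 1 / 2 then f (Fin.tail u.1) else x, by
      have hheight : Continuous fun u : Cube.boundary (Fin (j + 1)) => (u.1 0 : ℝ) :=
        continuous_subtype_val.comp ((continuous_apply 0).comp continuous_subtype_val)
      refine Continuous.if_le (by fun_prop) continuous_const hheight continuous_const ?_
      intro u hu
      refine f.2 _ (tail_mem_boundary u.2 ?_ ?_) <;> intro h <;> norm_num [h] at hu⟩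
  obtain ⟨g, hg⟩ := hX φ
  have hside (t : I) {u : Fin j → I} (hu : u ∈ Cube.boundary (Fin j)) :
      g (Fin.cons t u) = x := by
    have hfu : f u = x := f.2 u hu
    obtain ⟨i, hi⟩ := hu
    refine (hg ⟨Fin.cons t u, i.succ, by simpa using hi⟩).trans ?_
    simp only [φ, ContinuousMap.coe_mk, Fin.tail_cons, hfu, ite_self]
  refine ⟨⟨⟨⟨fun a => g (Fin.cons a.1 a.2), by fun_prop⟩, fun u => ?_, fun u => ?_⟩,
    fun t u hu => (hside t hu).trans (f.2 u hu).symm⟩⟩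
  · refine (hg ⟨Fin.cons 0 u, 0, .inl rfl⟩).trans (if_pos ?_)
    norm_num
  · refine (hg ⟨Fin.cons 1 u, 0, .inr rfl⟩).trans (if_neg ?_)
    norm_num

theorem subsingleton_homotopyGroup_of_nullhomotopic
    (hX : ∀ f : C(Metric.sphere (0 : Fin (j + 1) → ℝ) 1, X), f.Nullhomotopic) :
    Subsingleton (HomotopyGroup (Fin j) X x) := by
  have hconst := genLoop_homotopic_const_of_extension (x := x) (exists_extension_cube hX)
  refine ⟨fun a b => ?_⟩
  induction a using Quotient.inductionOn
  induction b using Quotient.inductionOn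
  exact Quotient.sound ((hconst _).trans (hconst _).symm)

end GenLoop

end HomotopyGroups

theorem configuration_space_connectivity_general {m r k s : ℕ} (hs : s ≤ r) (hpos : 0 < r * k + s)
    (C : Fin (k + 1) → Finset (Fin m)) (hCpart : ∀ v, ∃! i, v ∈ C i)
    (hCcard : ∀ i, 2 * r ≤ (C i).card + 1) :
    Nonempty (confRealization m r k s C) ∧
    ∀ j : ℕ, j + 1 < r * k + s → ∀ x : confRealization m r k s C,
      Subsingleton (HomotopyGroup (Fin j) (confRealization m r k s C) x) := by
  have hrealization :
      confRealization m r k s C = realization {S | IsConfSimplex m r k s C S} := rfl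
  have hbuilt := isMorseBuilt_isConfSimplex hs hCpart hCcard
  rw [hrealization]
  refine ⟨(hbuilt.nonempty_realization hpos.ne' ⟨∅, by simp [IsConfSimplex]⟩).to_subtype,
    fun j hj x => subsingleton_homotopyGroup_of_nullhomotopic fun f => ?_⟩
  have : Nonempty (Metric.sphere (0 : Fin (j + 1) → ℝ) 1) :=
    (NormedSpace.sphere_nonempty.2 zero_le_one).to_subtype
  refine hbuilt.nullhomotopic ?_ f
  calc dimH (Set.univ : Set (Metric.sphere (0 : Fin (j + 1) → ℝ) 1))
      = dimH (Metric.sphere (0 : Fin (j + 1) → ℝ) 1) := by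
        rw [← isometry_subtype_coe.dimH_image, Subtype.coe_image_univ]
    _ ≤ j := dimH_sphere_pi_le j
    _ < (r * k + s - 1 : ℕ) := by exact_mod_cast Nat.lt_sub_of_add_lt hj

/-- **Proposition 3.2** (`T:connect`): with `r = p^ν` a prime power, `d ≥ 1`,
`k = ⌈(r-1)d/r⌉`, `s = (r-1)d - r(k-1)` with `s < r`, `m = (2r-1)(k+1)` and color
classes of size `2r-1` partitioning `[m]`, the configuration space `𝔠` of tuples
`(A₁,…,A_r; B)` of disjoint rainbow sets (at most `s` of size `k+1`) is
`(rk+s-2)`-connected. -/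
theorem configuration_space_connectivity (p ν r d k s m : ℕ)
    (hp : p.Prime) (hν : 1 ≤ ν) (hr : r = p ^ ν) (hd : 1 ≤ d)
    (hk : (k : ℤ) = ⌈((r : ℚ) - 1) * d / r⌉)
    (hs : (s : ℤ) = ((r : ℤ) - 1) * d - r * ((k : ℤ) - 1))
    (hsr : s < r)
    (hm : m = (2 * r - 1) * (k + 1))
    (C : Fin (k + 1) → Finset (Fin m))
    (hCpart : ∀ v : Fin m, ∃! i, v ∈ C i)
    (hCcard : ∀ i, (C i).card = 2 * r - 1) :
    Nonempty (confRealization m r k s C) ∧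
    ∀ j : ℕ, j + 1 < r * k + s → ∀ x : confRealization m r k s C,
      Subsingleton (HomotopyGroup (Fin j) (confRealization m r k s C) x) := by
  have hr0 : 0 < r := hr ▸ pow_pos hp.pos ν
  have hdim : ((r * k + s : ℕ) : ℤ) = (r - 1) * d + r := by
    push_cast
    linear_combination hs
  have hpos : 0 < r * k + s := by
    have hr1 : (1 : ℤ) ≤ r := by exact_mod_cast hr0
    have := mul_nonneg (sub_nonneg.2 hr1) d.cast_nonneg
    omega
  exact configuration_space_connectivity_general hsr.le hpos C hCpart fun i => by
    rw [hCcard]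
    omega
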